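/- Fix r ∈ (0,1), λ ∈ (2r-1, 1) with λ > 0, and η > 0. For each m define ε_m := ε_m(λ,η,r), and set η⁻_m := √m·(μ_m(λ) - μ_m(λ - ε_m))/σ_m(λ - ε_m) and η⁺_m := -√m·(μ_m(λ) - μ_m(λ + ε_m))/σ_m(λ + ε_m). Then η⁻_m ~ η and η⁺_m ~ η as m → ∞; in particular η⁻_m → η and η⁺_m → η. -/

import Mathlib

open MeasureTheory ProbabilityTheory Filter Topology

noncomputable section

/-- Centered bivariate Gaussian pair `(w, v)` in which `w` and `v` are each standard
normal and `E[w v] = lam`, realized as the law of `(z₁, lam·z₁ + √(1-lam²)·z₂)`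
for independent standard normals `z₁, z₂`. -/
def gaussPair (lam : ℝ) : Measure (ℝ × ℝ) :=
  Measure.map (fun z : ℝ × ℝ => (z.1, lam * z.1 + Real.sqrt (1 - lam ^ 2) * z.2))
    ((gaussianReal 0 1).prod (gaussianReal 0 1))

/-- `μ(λ,h) = P(w ≥ h ∧ v ≥ h)`. -/
def mu (lam h : ℝ) : ℝ := (gaussPair lam {p : ℝ × ℝ | h ≤ p.1 ∧ h ≤ p.2}).toReal

/-- `σ(λ,h) = sqrt(μ(λ,h)(1-μ(λ,h)))`. -/
def sigma' (lam h : ℝ) : ℝ := Real.sqrt (mu lam h * (1 - mu lam h))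

/-- The threshold `h_m = sqrt(2 r log m)`. -/
def hthr (r : ℝ) (m : ℕ) : ℝ := Real.sqrt (2 * r * Real.log m)

/-- `μ_m(λ) = μ(λ, h_m)`. -/
def muM (r : ℝ) (m : ℕ) (lam : ℝ) : ℝ := mu lam (hthr r m)

/-- `σ_m(λ) = σ(λ, h_m)`. -/
def sigM (r : ℝ) (m : ℕ) (lam : ℝ) : ℝ := sigma' lam (hthr r m)

/-- Canonical probability space carrying `m` i.i.d. random vectors in `ℝ^d`
whose coordinates are i.i.d. standard normal: `a_i ω := ω i`. -/
def Prob (d m : ℕ) : Measure (Fin m → Fin d → ℝ) :=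
  Measure.pi fun _ => Measure.pi fun _ : Fin d => gaussianReal 0 1

/-- Euclidean inner product on `ℝ^d`. -/
def dotp {d : ℕ} (a x : Fin d → ℝ) : ℝ := ∑ j, a j * x j

/-- `x` lies on the unit sphere `S^{d-1}`. -/
def unitVec {d : ℕ} (x : Fin d → ℝ) : Prop := ∑ j, x j ^ 2 = 1

/-- The score `S_m(x,y) = (1/m) ∑_i 1[⟨a_i,x⟩ ≥ h_m]·1[⟨a_i,y⟩ ≥ h_m]`. -/
def score (d m : ℕ) (r : ℝ) (x y : Fin d → ℝ) (ω : Fin m → Fin d → ℝ) : ℝ :=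
  (1 / (m : ℝ)) * ∑ i, (if hthr r m ≤ dotp (ω i) x then (1 : ℝ) else 0) *
    (if hthr r m ≤ dotp (ω i) y then (1 : ℝ) else 0)

/-- The standard normal cumulative distribution function `Φ`. -/
def Phi (t : ℝ) : ℝ := (gaussianReal 0 1 (Set.Iic t)).toReal

/-- The standard normal upper tail `P(N(0,1) ≥ t)`. -/
def gaussTail (t : ℝ) : ℝ := (gaussianReal 0 1 {z : ℝ | t ≤ z}).toReal

/-- `ε_m(λ,η,r) = C(λ,r,m,η)·m^{-(λ-(2r-1))/(2(1+λ))}` with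
`C = √(2π)·(1+λ)·(1-λ²)^{1/4}·η/√(2r log m)`. -/
def epsm (r lam eta : ℝ) (m : ℕ) : ℝ :=
  (Real.sqrt (2 * Real.pi) * (1 + lam) * (1 - lam ^ 2) ^ ((1 : ℝ) / 4) * eta /
    Real.sqrt (2 * r * Real.log m)) * (m : ℝ) ^ (-(lam - (2 * r - 1)) / (2 * (1 + lam)))

/-! Plackett's identity says that the derivative of `mu s h` in `s` is the bivariate normal density
at `(h, h)`. Up to a factor `quadrantCoeff s / h²`, this is the derivative of `exp (-h² / (1 + s))`,
so Cauchy's mean value theorem compares increments of `mu · h` with increments of this exponential.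
The increment over `[s - 1/h, s]` gives `mu s h ~ quadrantCoeff s * exp (-h² / (1 + s)) / h²`,
because a Chernoff bound makes the value at the lower endpoint negligible. The increment over an
interval of length `|d|` with `h² d → 0` gives the differences in the theorem. Dividing by
`sigma' ~ √mu` leaves `d * h * √(quadrantCoeff s * exp (-h² / (1 + s))) / (1 + s)²`, and `epsm` is
exactly the `d` for which this equals `eta / √m`. The upper and lower increments are the cases of
`eta` and `-eta`. -/

open Real

lemma gaussianPDFReal_zero_one (x : ℝ) :
    gaussianPDFReal 0 1 x = (√(2 * π))⁻¹ * exp (-x ^ 2 / 2) := by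
  simp [gaussianPDFReal]

lemma continuous_gaussianPDFReal_zero_one : Continuous (gaussianPDFReal 0 1) := by
  unfold gaussianPDFReal
  fun_prop

lemma gaussianPDFReal_zero_one_le_one (x : ℝ) : gaussianPDFReal 0 1 x ≤ 1 := by
  have h_const : (√(2 * π))⁻¹ ≤ 1 :=
    inv_le_one_of_one_le₀ (Real.one_le_sqrt.2 (by linarith [Real.pi_gt_three]))
  have h_exp : exp (-x ^ 2 / 2) ≤ 1 := exp_le_one_iff.2 (by nlinarith [sq_nonneg x])
  rw [gaussianPDFReal_zero_one]
  exact mul_le_one₀ h_const (exp_pos _).le h_exp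

lemma tendsto_gaussianPDFReal_zero_one_atTop : Tendsto (gaussianPDFReal 0 1) atTop (𝓝 0) := by
  have h_arg : Tendsto (fun x : ℝ => -x ^ 2 / 2) atTop atBot :=
    (tendsto_neg_atTop_atBot.comp (tendsto_pow_atTop two_ne_zero)).atBot_div_const two_pos
  simpa only [← gaussianPDFReal_zero_one, mul_zero, Function.comp_apply] using
    (tendsto_exp_atBot.comp h_arg).const_mul (√(2 * π))⁻¹

lemma integrable_mul_gaussianPDFReal_zero_one :
    Integrable fun x => x * gaussianPDFReal 0 1 x := by
  refine ((integrable_mul_exp_neg_mul_sq one_half_pos).const_mul (√(2 * π))⁻¹).congr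
    (ae_of_all _ fun x => ?_)
  simp only [gaussianPDFReal_zero_one]
  ring_nf

lemma gaussTail_nonneg (t : ℝ) : 0 ≤ gaussTail t := ENNReal.toReal_nonneg

lemma gaussTail_le_one (t : ℝ) : gaussTail t ≤ 1 := measureReal_le_one

lemma gaussTail_eq_integral (t : ℝ) :
    gaussTail t = ∫ x in Set.Ioi t, gaussianPDFReal 0 1 x := by
  rw [gaussTail, show {z : ℝ | t ≤ z} = Set.Ici t from rfl,
    gaussianReal_apply_eq_integral 0 one_ne_zero,
    ENNReal.toReal_ofReal (integral_nonneg fun x => gaussianPDFReal_nonneg _ _ _),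
    integral_Ici_eq_integral_Ioi]

lemma hasDerivAt_gaussTail (t : ℝ) : HasDerivAt gaussTail (-gaussianPDFReal 0 1 t) t := by
  have h_eq : gaussTail = fun u => gaussTail 0 - ∫ x in (0 : ℝ)..u, gaussianPDFReal 0 1 x := by
    ext u
    rw [gaussTail_eq_integral, gaussTail_eq_integral, ← intervalIntegral.integral_Ioi_sub_Ioi'
      (integrable_gaussianPDFReal 0 1).integrableOn (integrable_gaussianPDFReal 0 1).integrableOn]
    ring
  rw [h_eq]
  exact (continuous_gaussianPDFReal_zero_one.integral_hasStrictDerivAt 0 t).hasDerivAt.const_sub _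

@[fun_prop]
lemma continuous_gaussTail : Continuous gaussTail :=
  continuous_iff_continuousAt.2 fun t => (hasDerivAt_gaussTail t).continuousAt

/-- The density at `(x, y)` of the law `gaussPair s` of a standard Gaussian pair with
correlation `s ∈ (-1, 1)`. -/
def bivariatePDF (s x y : ℝ) : ℝ :=
  exp (-(x ^ 2 - 2 * s * x * y + y ^ 2) / (2 * (1 - s ^ 2))) / (2 * π * √(1 - s ^ 2))

lemma one_sub_sq_pos {s : ℝ} (hs : s ∈ Set.Ioo (-1) 1) : 0 < 1 - s ^ 2 := by
  nlinarith [hs.1, hs.2]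

lemma bivariatePDF_eq_mul {s : ℝ} (hs : s ∈ Set.Ioo (-1) 1) (x y : ℝ) :
    bivariatePDF s x y = gaussianPDFReal 0 1 x *
      (gaussianPDFReal 0 1 ((y - s * x) / √(1 - s ^ 2)) / √(1 - s ^ 2)) := by
  have h_pos := one_sub_sq_pos hs
  have h_exp : exp (-(x ^ 2 - 2 * s * x * y + y ^ 2) / (2 * (1 - s ^ 2))) =
      exp (-x ^ 2 / 2) * exp (-((y - s * x) / √(1 - s ^ 2)) ^ 2 / 2) := by
    rw [← Real.exp_add, div_pow, sq_sqrt h_pos.le]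
    congr 1
    field_simp
    ring
  have h_const : 2 * π = √(2 * π) * √(2 * π) := (mul_self_sqrt (by positivity)).symm
  rw [bivariatePDF, h_exp, gaussianPDFReal_zero_one, gaussianPDFReal_zero_one]
  nth_rw 1 [h_const]
  field_simp

lemma bivariatePDF_nonneg (s x y : ℝ) : 0 ≤ bivariatePDF s x y := by
  unfold bivariatePDF
  positivity

lemma bivariatePDF_le {s : ℝ} (hs : s ∈ Set.Ioo (-1) 1) (x y : ℝ) :
    bivariatePDF s x y ≤ gaussianPDFReal 0 1 x / √(1 - s ^ 2) := by
  rw [bivariatePDF_eq_mul hs, ← mul_div_assoc]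
  gcongr
  exact mul_le_of_le_one_right (gaussianPDFReal_nonneg _ _ _) (gaussianPDFReal_zero_one_le_one _)

lemma hasDerivAt_bivariatePDF_fst (s x y : ℝ) :
    HasDerivAt (fun u => bivariatePDF s u y)
      (-((x - s * y) / (1 - s ^ 2) * bivariatePDF s x y)) x := by
  have h_quad : HasDerivAt (fun u => u ^ 2 - 2 * s * u * y + y ^ 2) (2 * (x - s * y)) x := by
    refine (((hasDerivAt_pow 2 x).sub
      (((hasDerivAt_id x).const_mul (2 * s)).mul_const y)).add_const (y ^ 2)).congr_deriv ?_
    simp only [Nat.cast_ofNat]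
    ring
  refine ((h_quad.neg.div_const (2 * (1 - s ^ 2))).exp.div_const _).congr_deriv ?_
  simp only [bivariatePDF, Pi.neg_apply]
  generalize 1 - s ^ 2 = c
  ring

lemma tendsto_bivariatePDF_fst_atTop {s : ℝ} (hs : s ∈ Set.Ioo (-1) 1) (y : ℝ) :
    Tendsto (fun x => bivariatePDF s x y) atTop (𝓝 0) := by
  refine squeeze_zero (bivariatePDF_nonneg s · y) (bivariatePDF_le hs · y) ?_
  simpa only [zero_div] using tendsto_gaussianPDFReal_zero_one_atTop.div_const √(1 - s ^ 2)

lemma hasDerivAt_sub_mul_div_sqrt {s : ℝ} (hs : s ∈ Set.Ioo (-1) 1) (x y : ℝ) :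
    HasDerivAt (fun t => (y - t * x) / √(1 - t ^ 2)) (-((x - s * y) / √(1 - s ^ 2) ^ 3)) s := by
  have h_pos := one_sub_sq_pos hs
  have h_sqrt : HasDerivAt (fun t : ℝ => √(1 - t ^ 2)) (-(2 * s) / (2 * √(1 - s ^ 2))) s := by
    simpa using ((hasDerivAt_pow 2 s).const_sub 1).sqrt h_pos.ne'
  have h_num : HasDerivAt (fun t : ℝ => y - t * x) (-x) s := by
    simpa using ((hasDerivAt_id s).mul_const x).const_sub y
  refine (h_num.div h_sqrt (sqrt_pos.2 h_pos).ne').congr_deriv ?_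
  have h_sq := sq_sqrt h_pos.le
  have h_ne := (sqrt_pos.2 h_pos).ne'
  generalize √(1 - s ^ 2) = w at h_sq h_ne
  field_simp
  rw [h_sq]
  ring

lemma hasDerivAt_gaussianPDFReal_mul_gaussTail {s : ℝ} (hs : s ∈ Set.Ioo (-1) 1) (x y : ℝ) :
    HasDerivAt (fun t => gaussianPDFReal 0 1 x * gaussTail ((y - t * x) / √(1 - t ^ 2)))
      ((x - s * y) / (1 - s ^ 2) * bivariatePDF s x y) s := by
  refine (((hasDerivAt_gaussTail _).comp s
    (hasDerivAt_sub_mul_div_sqrt hs x y)).const_mul _).congr_deriv ?_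
  have h_pos := one_sub_sq_pos hs
  have h_cube : √(1 - s ^ 2) ^ 3 = (1 - s ^ 2) * √(1 - s ^ 2) := by
    rw [pow_succ, sq_sqrt h_pos.le]
  rw [bivariatePDF_eq_mul hs, h_cube]
  field_simp

lemma mu_eq_prod_real (s h : ℝ) :
    mu s h = ((gaussianReal 0 1).prod (gaussianReal 0 1)).real
      {z | h ≤ z.1 ∧ h ≤ s * z.1 + √(1 - s ^ 2) * z.2} := by
  have h_set : MeasurableSet {p : ℝ × ℝ | h ≤ p.1 ∧ h ≤ p.2} :=
    (measurableSet_le measurable_const measurable_fst).inter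
      (measurableSet_le measurable_const measurable_snd)
  rw [mu, gaussPair, Measure.map_apply (by fun_prop) h_set]
  rfl

lemma mu_eq_integral {s : ℝ} (hs : s ∈ Set.Ioo (-1) 1) (h : ℝ) :
    mu s h = ∫ x in Set.Ioi h, gaussianPDFReal 0 1 x * gaussTail ((h - s * x) / √(1 - s ^ 2)) := by
  have h_set : MeasurableSet {z : ℝ × ℝ | h ≤ z.1 ∧ h ≤ s * z.1 + √(1 - s ^ 2) * z.2} :=
    (measurableSet_le measurable_const measurable_fst).inter
      (measurableSet_le measurable_const
        ((measurable_fst.const_mul s).add (measurable_snd.const_mul √(1 - s ^ 2))))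
  have h_slice (x : ℝ) : (gaussianReal 0 1 (Prod.mk x ⁻¹'
      {z : ℝ × ℝ | h ≤ z.1 ∧ h ≤ s * z.1 + √(1 - s ^ 2) * z.2})).toReal =
      (Set.Ici h).indicator (fun x => gaussTail ((h - s * x) / √(1 - s ^ 2))) x := by
    by_cases hx : h ≤ x
    · simp only [Set.indicator_of_mem (Set.mem_Ici.2 hx), gaussTail, Set.preimage_ofPred_eq, hx,
        true_and, div_le_iff₀' (sqrt_pos.2 (one_sub_sq_pos hs)), sub_le_iff_le_add']
    · simp [hx]
  rw [mu_eq_prod_real, Measure.real, Measure.prod_apply h_set,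
    ← integral_toReal (measurable_measure_prodMk_left h_set).aemeasurable
      (ae_of_all _ fun _ => measure_lt_top _ _),
    integral_congr_ae (ae_of_all _ h_slice), integral_gaussianReal_eq_integral_smul one_ne_zero,
    ← integral_Ici_eq_integral_Ioi, ← integral_indicator measurableSet_Ici]
  simp only [smul_eq_mul, Set.indicator_mul_right]

lemma norm_sub_mul_div_mul_bivariatePDF_le {a t : ℝ} (ha : a < 1) (ht : |t| < a) (x y : ℝ) :
    ‖(x - t * y) / (1 - t ^ 2) * bivariatePDF t x y‖ ≤
      (|x| + |y|) * gaussianPDFReal 0 1 x / ((1 - a ^ 2) * √(1 - a ^ 2)) := by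
  have ht' : t ∈ Set.Ioo (-1) 1 := abs_lt.1 (ht.trans ha)
  have ha_pos : 0 < 1 - a ^ 2 := one_sub_sq_pos ⟨by linarith [abs_nonneg t], ha⟩
  have h_sq : t ^ 2 ≤ a ^ 2 := sq_le_sq.2 (ht.le.trans (le_abs_self a))
  have h_num : |x - t * y| ≤ |x| + |y| := by
    refine (abs_sub _ _).trans (add_le_add_right ?_ _)
    rw [abs_mul]
    exact mul_le_of_le_one_left (abs_nonneg y) (ht.trans ha).le
  have h_pdf : bivariatePDF t x y ≤ gaussianPDFReal 0 1 x / √(1 - a ^ 2) := by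
    refine (bivariatePDF_le ht' x y).trans ?_
    have := gaussianPDFReal_nonneg 0 1 x
    have := sqrt_pos.2 ha_pos
    gcongr
  rw [norm_mul, norm_div, norm_eq_abs, norm_eq_abs, norm_eq_abs,
    abs_of_pos (one_sub_sq_pos ht'), abs_of_nonneg (bivariatePDF_nonneg t x y), ← div_mul_div_comm]
  have := bivariatePDF_nonneg t x y
  gcongr

lemma integrable_abs_add_abs_mul_gaussianPDFReal (y : ℝ) :
    Integrable fun x => (|x| + |y|) * gaussianPDFReal 0 1 x := by
  have h_sum := integrable_mul_gaussianPDFReal_zero_one.norm.add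
    ((integrable_gaussianPDFReal 0 1).const_mul |y|)
  refine h_sum.congr (ae_of_all _ fun x => ?_)
  simp only [Pi.add_apply, norm_mul, norm_eq_abs, abs_of_nonneg (gaussianPDFReal_nonneg 0 1 x)]
  ring

lemma integral_Ioi_sub_mul_div_mul_bivariatePDF {s y a : ℝ} (hs : s ∈ Set.Ioo (-1) 1)
    (h_int : IntegrableOn (fun x => (x - s * y) / (1 - s ^ 2) * bivariatePDF s x y) (Set.Ioi a)) :
    ∫ x in Set.Ioi a, (x - s * y) / (1 - s ^ 2) * bivariatePDF s x y = bivariatePDF s a y := by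
  have h_ftc := integral_Ioi_of_hasDerivAt_of_tendsto'
    (fun x _ => (hasDerivAt_bivariatePDF_fst s x y).neg) (by simpa using h_int)
    (tendsto_bivariatePDF_fst_atTop hs y).neg (a := a)
  simpa using h_ftc

theorem hasDerivAt_mu {s : ℝ} (hs : s ∈ Set.Ioo (-1) 1) (h : ℝ) :
    HasDerivAt (fun t => mu t h) (bivariatePDF s h h) s := by
  obtain ⟨a, hsa, ha⟩ : ∃ a, |s| < a ∧ a < 1 := exists_between (abs_lt.2 hs)
  have h_nhds : {t | |t| < a} ∈ 𝓝 s := continuous_abs.continuousAt.eventually_lt_const hsa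
  have h_dom := hasDerivAt_integral_of_dominated_loc_of_deriv_le
    (μ := volume.restrict (Set.Ioi h))
    (F := fun t x => gaussianPDFReal 0 1 x * gaussTail ((h - t * x) / √(1 - t ^ 2)))
    (F' := fun t x => (x - t * h) / (1 - t ^ 2) * bivariatePDF t x h) h_nhds
    (Eventually.of_forall fun t => by fun_prop)
    ((integrable_gaussianPDFReal 0 1).restrict.mul_bdd (by fun_prop)
      (ae_of_all _ fun x => by
        simpa [abs_of_nonneg (gaussTail_nonneg _)] using gaussTail_le_one _))
    (by unfold bivariatePDF; fun_prop)
    (ae_of_all _ fun x t ht => norm_sub_mul_div_mul_bivariatePDF_le ha ht x h)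
    ((integrable_abs_add_abs_mul_gaussianPDFReal h).div_const _).restrict
    (ae_of_all _ fun x t ht =>
      hasDerivAt_gaussianPDFReal_mul_gaussTail (abs_lt.1 (ht.trans ha)) x h)
  rw [integral_Ioi_sub_mul_div_mul_bivariatePDF hs h_dom.1] at h_dom
  refine h_dom.2.congr_of_eventuallyEq ?_
  filter_upwards [h_nhds] with t ht
  exact mu_eq_integral (abs_lt.1 (ht.trans ha)) h

lemma integrable_exp_linear_prod_gaussianReal (a b : ℝ) :
    Integrable (fun z : ℝ × ℝ => exp (a * z.1 + b * z.2))
      ((gaussianReal 0 1).prod (gaussianReal 0 1)) := by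
  simp only [exp_add]
  exact (integrable_exp_mul_gaussianReal a).mul_prod (integrable_exp_mul_gaussianReal b)

lemma integral_exp_linear_prod_gaussianReal (a b : ℝ) :
    ∫ z : ℝ × ℝ, exp (a * z.1 + b * z.2) ∂((gaussianReal 0 1).prod (gaussianReal 0 1)) =
      exp ((a ^ 2 + b ^ 2) / 2) := by
  have h_mgf (c : ℝ) : ∫ x, exp (c * x) ∂(gaussianReal 0 1) = exp (c ^ 2 / 2) := by
    simpa [mgf] using congrFun (mgf_id_gaussianReal (μ := 0) (v := 1)) c
  simp only [exp_add]
  rw [integral_prod_mul (fun x => exp (a * x)) (fun y => exp (b * y)), h_mgf, h_mgf, ← exp_add]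
  ring_nf

lemma prod_gaussianReal_real_linear_ge_le_exp {a b : ℝ} (hab : 0 < a ^ 2 + b ^ 2) {u : ℝ}
    (hu : 0 ≤ u) :
    ((gaussianReal 0 1).prod (gaussianReal 0 1)).real {z | u ≤ a * z.1 + b * z.2} ≤
      exp (-u ^ 2 / (2 * (a ^ 2 + b ^ 2))) := by
  have h_exp (z : ℝ × ℝ) : exp (u / (a ^ 2 + b ^ 2) * (a * z.1 + b * z.2)) =
      exp (u / (a ^ 2 + b ^ 2) * a * z.1 + u / (a ^ 2 + b ^ 2) * b * z.2) := by ring_nf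
  refine (measure_ge_le_exp_mul_mgf u (div_nonneg hu hab.le) ?_).trans_eq ?_
  · simpa only [h_exp] using integrable_exp_linear_prod_gaussianReal _ _
  · simp only [mgf, h_exp]
    rw [integral_exp_linear_prod_gaussianReal, ← exp_add]
    congr 1
    field_simp
    ring

/-- The exponential factor `exp (-h² / (1 + s))` in the decay of `mu s h` as `h → ∞`. -/
def quadrantDecay (s h : ℝ) : ℝ := exp (-h ^ 2 / (1 + s))

lemma quadrantDecay_pos (s h : ℝ) : 0 < quadrantDecay s h := exp_pos _

lemma quadrantDecay_le_one {s : ℝ} (hs : -1 < s) (h : ℝ) : quadrantDecay s h ≤ 1 := by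
  rw [quadrantDecay, exp_le_one_iff, neg_div]
  have : 0 < 1 + s := by linarith
  exact neg_nonpos.2 (by positivity)

lemma quadrantDecay_add {s d : ℝ} (hs : 1 + s ≠ 0) (hd : 1 + (s + d) ≠ 0) (h : ℝ) :
    quadrantDecay (s + d) h =
      quadrantDecay s h * exp (h ^ 2 * d / ((1 + s) * (1 + (s + d)))) := by
  rw [quadrantDecay, quadrantDecay, ← exp_add]
  congr 1
  field_simp
  ring

lemma hasDerivAt_quadrantDecay {s : ℝ} (hs : 1 + s ≠ 0) (h : ℝ) :
    HasDerivAt (fun t => quadrantDecay t h) (h ^ 2 / (1 + s) ^ 2 * quadrantDecay s h) s := by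
  have h_arg : HasDerivAt (fun t : ℝ => -h ^ 2 / (1 + t)) (h ^ 2 / (1 + s) ^ 2) s := by
    refine ((hasDerivAt_const s (-h ^ 2)).div ((hasDerivAt_id s).const_add 1) hs).congr_deriv ?_
    simp only [zero_mul, mul_one, zero_sub, neg_neg, id_eq]
  simpa only [quadrantDecay, mul_comm] using h_arg.exp

-- If both coordinates of the pair exceed `h`, their sum, of variance `2 (1 + s)`, exceeds `2 h`.
theorem mu_le_quadrantDecay {s h : ℝ} (hs : s ∈ Set.Ioo (-1) 1) (hh : 0 ≤ h) :
    mu s h ≤ quadrantDecay s h := by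
  have h_pos : 0 < 1 + s := by linarith [hs.1]
  have h_var : (1 + s) ^ 2 + √(1 - s ^ 2) ^ 2 = 2 * (1 + s) := by
    rw [sq_sqrt (one_sub_sq_pos hs).le]
    ring
  rw [mu_eq_prod_real]
  calc ((gaussianReal 0 1).prod (gaussianReal 0 1)).real
        {z | h ≤ z.1 ∧ h ≤ s * z.1 + √(1 - s ^ 2) * z.2}
    _ ≤ ((gaussianReal 0 1).prod (gaussianReal 0 1)).real
        {z | 2 * h ≤ (1 + s) * z.1 + √(1 - s ^ 2) * z.2} :=
        measureReal_mono fun z hz => by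
          simp only [Set.mem_ofPred_eq] at hz ⊢
          linarith [hz.1, hz.2]
    _ ≤ exp (-(2 * h) ^ 2 / (2 * ((1 + s) ^ 2 + √(1 - s ^ 2) ^ 2))) :=
        prod_gaussianReal_real_linear_ge_le_exp (by positivity) (by positivity)
    _ = quadrantDecay s h := by
        rw [h_var, quadrantDecay]
        congr 1
        field_simp

lemma mu_nonneg (s h : ℝ) : 0 ≤ mu s h := ENNReal.toReal_nonneg

/-- The constant `(1 + s)² / (2π √(1 - s²))` in the tail asymptotics
`mu s h ~ quadrantCoeff s * quadrantDecay s h / h²`. -/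
def quadrantCoeff (s : ℝ) : ℝ := (1 + s) ^ 2 / (2 * π * √(1 - s ^ 2))

lemma quadrantCoeff_pos {s : ℝ} (hs : s ∈ Set.Ioo (-1) 1) : 0 < quadrantCoeff s := by
  have := sqrt_pos.2 (one_sub_sq_pos hs)
  have : 0 < 1 + s := by linarith [hs.1]
  unfold quadrantCoeff
  positivity

lemma continuousAt_quadrantCoeff {s : ℝ} (hs : s ∈ Set.Ioo (-1) 1) :
    ContinuousAt quadrantCoeff s := by
  have := sqrt_pos.2 (one_sub_sq_pos hs)
  unfold quadrantCoeff
  fun_prop (disch := positivity)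

lemma bivariatePDF_self {s : ℝ} (hs : s ∈ Set.Ioo (-1) 1) (h : ℝ) :
    bivariatePDF s h h = quadrantCoeff s / (1 + s) ^ 2 * quadrantDecay s h := by
  have h_ne : 1 + s ≠ 0 := by linarith [hs.1]
  have h_exp : -(h ^ 2 - 2 * s * h * h + h ^ 2) / (2 * (1 - s ^ 2)) = -h ^ 2 / (1 + s) := by
    have := (one_sub_sq_pos hs).ne'
    field_simp
    ring
  rw [bivariatePDF, h_exp, quadrantCoeff, quadrantDecay]
  field_simp

-- Cauchy's mean value theorem: by `hasDerivAt_mu`, `h ^ 2` times the derivative of `mu · h` is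
-- `quadrantCoeff` times the derivative of `quadrantDecay · h`.
lemma exists_sq_mul_mu_sub_eq {a b : ℝ} (ha : a ∈ Set.Ioo (-1) 1) (hb : b ∈ Set.Ioo (-1) 1)
    (h : ℝ) :
    ∃ c ∈ Set.uIcc a b, h ^ 2 * (mu b h - mu a h) =
      quadrantCoeff c * (quadrantDecay b h - quadrantDecay a h) := by
  wlog hab : a ≤ b generalizing a b
  · obtain ⟨c, hc, h_eq⟩ := this hb ha (le_of_not_ge hab)
    exact ⟨c, Set.uIcc_comm b a ▸ hc, by linarith⟩
  rcases hab.eq_or_lt with rfl | hab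
  · exact ⟨a, Set.left_mem_uIcc, by simp⟩
  have h_mem {t : ℝ} (ht : t ∈ Set.Icc a b) : t ∈ Set.Ioo (-1) 1 :=
    ⟨ha.1.trans_le ht.1, ht.2.trans_lt hb.2⟩
  have h_ne {t : ℝ} (ht : t ∈ Set.Icc a b) : 1 + t ≠ 0 := by linarith [(h_mem ht).1]
  obtain ⟨c, hc, h_eq⟩ := exists_ratio_hasDerivAt_eq_ratio_slope (fun t => mu t h)
    (fun t => bivariatePDF t h h) hab
    (HasDerivAt.continuousOn fun t ht => hasDerivAt_mu (h_mem ht) h)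
    (fun t ht => hasDerivAt_mu (h_mem (Set.Ioo_subset_Icc_self ht)) h)
    (fun t => quadrantDecay t h) (fun t => h ^ 2 / (1 + t) ^ 2 * quadrantDecay t h)
    (HasDerivAt.continuousOn fun t ht => hasDerivAt_quadrantDecay (h_ne ht) h)
    (fun t ht => hasDerivAt_quadrantDecay (h_ne (Set.Ioo_subset_Icc_self ht)) h)
  have hc' := Set.Ioo_subset_Icc_self hc
  refine ⟨c, Set.Icc_subset_uIcc hc', ?_⟩
  rw [bivariatePDF_self (h_mem hc')] at h_eq
  have h_decay := (quadrantDecay_pos c h).ne'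
  have h_den := h_ne hc'
  field_simp at h_eq
  linarith

section Tail

open Asymptotics

variable {α : Type*} {l : Filter α} {s : ℝ} {h d : α → ℝ}

lemma isEquivalent_sq_mul_mu_sub (hs : s ∈ Set.Ioo (-1) 1) {a b : α → ℝ}
    (ha : Tendsto a l (𝓝 s)) (hb : Tendsto b l (𝓝 s)) :
    (fun i => h i ^ 2 * (mu (b i) (h i) - mu (a i) (h i))) ~[l]
      fun i => quadrantCoeff s * (quadrantDecay (b i) (h i) - quadrantDecay (a i) (h i)) := by
  have h_exists (i : α) : ∃ c, a i ∈ Set.Ioo (-1) 1 → b i ∈ Set.Ioo (-1) 1 →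
      c ∈ Set.uIcc (a i) (b i) ∧ h i ^ 2 * (mu (b i) (h i) - mu (a i) (h i)) =
        quadrantCoeff c * (quadrantDecay (b i) (h i) - quadrantDecay (a i) (h i)) := by
    by_cases hi : a i ∈ Set.Ioo (-1) 1 ∧ b i ∈ Set.Ioo (-1) 1
    · obtain ⟨c, hc⟩ := exists_sq_mul_mu_sub_eq hi.1 hi.2 (h i)
      exact ⟨c, fun _ _ => hc⟩
    · exact ⟨0, fun ha' hb' => absurd ⟨ha', hb'⟩ hi⟩
  choose c hc using h_exists
  have h_ev : ∀ᶠ i in l, c i ∈ Set.uIcc (a i) (b i) ∧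
      h i ^ 2 * (mu (b i) (h i) - mu (a i) (h i)) =
        quadrantCoeff (c i) * (quadrantDecay (b i) (h i) - quadrantDecay (a i) (h i)) := by
    filter_upwards [ha (Ioo_mem_nhds hs.1 hs.2), hb (Ioo_mem_nhds hs.1 hs.2)] with i ha' hb'
    exact hc i ha' hb'
  have h_lim : Tendsto c l (𝓝 s) := tendsto_of_tendsto_of_tendsto_of_le_of_le'
    (by simpa only [min_self] using ha.min hb) (by simpa only [max_self] using ha.max hb)
    (h_ev.mono fun i hi => hi.1.1) (h_ev.mono fun i hi => hi.1.2)
  have h_coeff : (fun i => quadrantCoeff (c i)) ~[l] Function.const α (quadrantCoeff s) :=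
    (isEquivalent_const_iff_tendsto (quadrantCoeff_pos hs).ne').2
      ((continuousAt_quadrantCoeff hs).tendsto.comp h_lim)
  exact (h_coeff.mul IsEquivalent.refl).congr_left (h_ev.mono fun i hi => hi.2.symm)

lemma isEquivalent_exp_sub_one : (fun x => exp x - 1) ~[𝓝 0] fun x => x := by
  simpa [IsEquivalent, Pi.sub_def] using hasDerivAt_iff_isLittleO_nhds_zero.1 (hasDerivAt_exp 0)

lemma tendsto_zero_of_tendsto_sq_mul (hh : Tendsto h l atTop)
    (hhd : Tendsto (fun i => h i ^ 2 * d i) l (𝓝 0)) : Tendsto d l (𝓝 0) := by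
  have h_inv : Tendsto (fun i => (h i ^ 2)⁻¹) l (𝓝 0) :=
    ((tendsto_pow_atTop two_ne_zero).comp hh).inv_tendsto_atTop
  refine (mul_zero (0 : ℝ) ▸ h_inv.mul hhd).congr' ?_
  filter_upwards [hh.eventually_ne_atTop 0] with i hi
  field_simp

lemma isEquivalent_quadrantDecay_add_sub (hs : -1 < s) (hd : Tendsto d l (𝓝 0))
    (hhd : Tendsto (fun i => h i ^ 2 * d i) l (𝓝 0)) :
    (fun i => quadrantDecay (s + d i) (h i) - quadrantDecay s (h i)) ~[l]
      fun i => quadrantDecay s (h i) * (h i ^ 2 * d i / (1 + s) ^ 2) := by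
  have hs' : 1 + s ≠ 0 := by linarith
  have h_den : Tendsto (fun i => (1 + s) * (1 + (s + d i))) l (𝓝 ((1 + s) ^ 2)) := by
    simpa only [add_zero, ← sq] using ((hd.const_add s).const_add 1).const_mul (1 + s)
  have h_arg : (fun i => h i ^ 2 * d i / ((1 + s) * (1 + (s + d i)))) ~[l]
      fun i => h i ^ 2 * d i / (1 + s) ^ 2 :=
    IsEquivalent.refl.div ((isEquivalent_const_iff_tendsto (pow_ne_zero 2 hs')).2 h_den)
  have h_zero : Tendsto (fun i => h i ^ 2 * d i / ((1 + s) * (1 + (s + d i)))) l (𝓝 0) := by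
    simpa only [zero_div, Pi.div_def] using hhd.div h_den (pow_ne_zero 2 hs')
  refine (IsEquivalent.refl.mul ((isEquivalent_exp_sub_one.comp_tendsto h_zero).trans
    h_arg)).congr_left ?_
  filter_upwards [h_den.eventually_ne (pow_ne_zero 2 hs')] with i hi
  simp only [Pi.mul_apply, Function.comp_apply, mul_sub_one,
    ← quadrantDecay_add hs' (right_ne_zero_of_mul hi)]

lemma isLittleO_sq_mul_quadrantDecay_sub_inv (hs : -1 < s) :
    (fun x => x ^ 2 * quadrantDecay (s - x⁻¹) x) =o[atTop] quadrantDecay s := by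
  have hs' : 0 < 1 + s := by linarith
  have h_exp : Tendsto (fun x => x ^ 2 * exp (-((1 + s) ^ 2)⁻¹ * x)) atTop (𝓝 0) := by
    simpa using tendsto_rpow_mul_exp_neg_mul_atTop_nhds_zero 2 ((1 + s) ^ 2)⁻¹ (by positivity)
  refine IsBigO.trans_isLittleO (g := fun x =>
    x ^ 2 * exp (-((1 + s) ^ 2)⁻¹ * x) * quadrantDecay s x) ?_ ?_
  · refine IsBigO.of_bound' ?_
    filter_upwards [eventually_gt_atTop 0, eventually_gt_atTop (1 + s)⁻¹] with x hx hx'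
    have h_inv : x⁻¹ < 1 + s := inv_lt_of_inv_lt₀ hs' hx'
    have h_pos : 0 < 1 + (s + -x⁻¹) := by linarith
    have h_arg : x ^ 2 * -x⁻¹ / ((1 + s) * (1 + (s + -x⁻¹))) ≤ -((1 + s) ^ 2)⁻¹ * x := by
      have : x ^ 2 * -x⁻¹ = -x := by field_simp
      rw [this, neg_div, neg_mul, neg_le_neg_iff, inv_mul_eq_div, sq]
      have : 0 < x⁻¹ := inv_pos.2 hx
      gcongr
      linarith
    rw [sub_eq_add_neg, quadrantDecay_add hs'.ne' h_pos.ne', mul_comm (quadrantDecay s x),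
      ← mul_assoc]
    have := quadrantDecay_pos s x
    rw [norm_of_nonneg (by positivity), norm_of_nonneg (by positivity)]
    gcongr
  · simpa only [one_mul] using
      ((isLittleO_one_iff ℝ).2 h_exp).mul_isBigO (isBigO_refl (quadrantDecay s) atTop)

-- The chord from `s - h⁻¹` to `s` is long enough for its lower endpoint to be negligible.
theorem isEquivalent_mu (hs : s ∈ Set.Ioo (-1) 1) :
    mu s ~[atTop] fun h => quadrantCoeff s * quadrantDecay s h / h ^ 2 := by
  have h_lim : Tendsto (fun x : ℝ => s - x⁻¹) atTop (𝓝 s) := by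
    simpa only [sub_zero] using tendsto_inv_atTop_zero.const_sub s
  have h_coeff := (quadrantCoeff_pos hs).ne'
  have h_decay := isLittleO_sq_mul_quadrantDecay_sub_inv hs.1
  have h_lower : (fun x => x ^ 2 * mu (s - x⁻¹) x) =o[atTop]
      fun x => quadrantCoeff s * quadrantDecay s x := by
    refine IsBigO.trans_isLittleO (IsBigO.of_bound' ?_) (h_decay.const_mul_right h_coeff)
    filter_upwards [h_lim (Ioo_mem_nhds hs.1 hs.2), eventually_ge_atTop 0] with x hx hx'
    have := mu_nonneg (s - x⁻¹) x
    have := quadrantDecay_pos (s - x⁻¹) x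
    have := mu_le_quadrantDecay hx hx'
    rw [norm_of_nonneg (by positivity), norm_of_nonneg (by positivity)]
    gcongr
  have h_decay' : (fun x => quadrantDecay (s - x⁻¹) x) =o[atTop] quadrantDecay s := by
    refine IsBigO.trans_isLittleO (IsBigO.of_bound' ?_) h_decay
    filter_upwards [eventually_ge_atTop 1] with x hx
    rw [norm_mul, norm_pow]
    refine le_mul_of_one_le_left (norm_nonneg _) (one_le_pow₀ ?_)
    exact hx.trans (le_norm_self x)
  have h_chord := (isEquivalent_sq_mul_mu_sub hs h_lim tendsto_const_nhds (h := id)).trans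
    (IsEquivalent.refl.mul (IsEquivalent.refl.sub_isLittleO h_decay'))
  refine ((h_chord.add_isLittleO h_lower).div (v := fun x => x ^ 2) .refl).congr_left ?_
  filter_upwards [eventually_ne_atTop 0] with x hx
  simp only [Pi.div_apply, Pi.add_apply, id_eq]
  field_simp
  ring

lemma isEquivalent_mu_add_sub (hs : s ∈ Set.Ioo (-1) 1) (hh : Tendsto h l atTop)
    (hhd : Tendsto (fun i => h i ^ 2 * d i) l (𝓝 0)) :
    (fun i => mu (s + d i) (h i) - mu s (h i)) ~[l]
      fun i => quadrantCoeff s * quadrantDecay s (h i) * d i / (1 + s) ^ 2 := by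
  have hd := tendsto_zero_of_tendsto_sq_mul hh hhd
  have h_scaled := (isEquivalent_sq_mul_mu_sub hs tendsto_const_nhds
    (by simpa only [add_zero] using hd.const_add s)).trans
      (IsEquivalent.refl.mul (isEquivalent_quadrantDecay_add_sub hs.1 hd hhd))
  refine ((h_scaled.div (v := fun i => h i ^ 2) .refl).congr_left ?_).congr_right ?_
  all_goals
    filter_upwards [hh.eventually_ne_atTop 0] with i hi
    simp only [Pi.div_apply, Pi.mul_apply]
    field_simp

lemma isEquivalent_mu_add (hs : s ∈ Set.Ioo (-1) 1) (hh : Tendsto h l atTop)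
    (hhd : Tendsto (fun i => h i ^ 2 * d i) l (𝓝 0)) :
    (fun i => mu (s + d i) (h i)) ~[l]
      fun i => quadrantCoeff s * quadrantDecay s (h i) / h i ^ 2 := by
  have h_small : (fun i => quadrantCoeff s * quadrantDecay s (h i) * d i / (1 + s) ^ 2) =o[l]
      fun i => quadrantCoeff s * quadrantDecay s (h i) / h i ^ 2 := by
    have h_zero : Tendsto (fun i => h i ^ 2 * d i / (1 + s) ^ 2) l (𝓝 0) := by
      simpa only [zero_div] using hhd.div_const ((1 + s) ^ 2)
    refine (((isLittleO_one_iff ℝ).2 h_zero).mul_isBigO (isBigO_refl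
      (fun i => quadrantCoeff s * quadrantDecay s (h i) / h i ^ 2) l)).congr' ?_ ?_
    · filter_upwards [hh.eventually_ne_atTop 0] with i hi
      field_simp
    · simp only [one_mul, EventuallyEq.refl]
  refine (((isEquivalent_mu hs).comp_tendsto hh).add_isLittleO
    ((isEquivalent_mu_add_sub hs hh hhd).isBigO.trans_isLittleO h_small)).congr_left ?_
  exact .of_forall fun i => add_sub_cancel _ _

lemma isEquivalent_sigma'_add (hs : s ∈ Set.Ioo (-1) 1) (hh : Tendsto h l atTop)
    (hhd : Tendsto (fun i => h i ^ 2 * d i) l (𝓝 0)) :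
    (fun i => sigma' (s + d i) (h i)) ~[l]
      fun i => √(quadrantCoeff s * quadrantDecay s (h i)) / h i := by
  have h_coeff := quadrantCoeff_pos hs
  have h_mu := isEquivalent_mu_add hs hh hhd
  have h_sq : Tendsto (fun i => h i ^ 2) l atTop := (tendsto_pow_atTop two_ne_zero).comp hh
  have h_zero : Tendsto (fun i => mu (s + d i) (h i)) l (𝓝 0) := by
    refine h_mu.symm.tendsto_nhds (squeeze_zero (fun i => ?_) (fun i => ?_)
      (tendsto_const_nhds (x := quadrantCoeff s).div_atTop h_sq))
    · have := quadrantDecay_pos s (h i)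
      positivity
    · gcongr
      exact mul_le_of_le_one_right h_coeff.le (quadrantDecay_le_one hs.1 _)
  have h_compl : (fun i => 1 - mu (s + d i) (h i)) ~[l] Function.const α 1 :=
    (isEquivalent_const_iff_tendsto one_ne_zero).2 (by simpa using h_zero.const_sub 1)
  have h_prod : (fun i => mu (s + d i) (h i) * (1 - mu (s + d i) (h i))) ~[l]
      fun i => quadrantCoeff s * quadrantDecay s (h i) / h i ^ 2 :=
    (h_mu.mul h_compl).congr_right (.of_forall fun i => mul_one _)
  refine ((h_prod.rpow (r := 1 / 2) fun i => ?_).congr_left ?_).congr_right ?_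
  · have := quadrantDecay_pos s (h i)
    positivity
  · exact .of_forall fun i => (sqrt_eq_rpow _).symm
  · filter_upwards [hh.eventually_ge_atTop 0] with i hi
    rw [Pi.pow_apply, ← sqrt_eq_rpow, sqrt_div' _ (sq_nonneg _), sqrt_sq hi]

theorem isEquivalent_mu_add_sub_div_sigma' (hs : s ∈ Set.Ioo (-1) 1) (hh : Tendsto h l atTop)
    (hhd : Tendsto (fun i => h i ^ 2 * d i) l (𝓝 0)) :
    (fun i => (mu (s + d i) (h i) - mu s (h i)) / sigma' (s + d i) (h i)) ~[l]
      fun i => d i * h i * √(quadrantCoeff s * quadrantDecay s (h i)) / (1 + s) ^ 2 := by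
  refine ((isEquivalent_mu_add_sub hs hh hhd).div
    (isEquivalent_sigma'_add hs hh hhd)).congr_right (.of_forall fun i => ?_)
  have h_pos : 0 < quadrantCoeff s * quadrantDecay s (h i) :=
    mul_pos (quadrantCoeff_pos hs) (quadrantDecay_pos s (h i))
  simp only [Pi.div_apply]
  nth_rw 1 [← mul_self_sqrt h_pos.le]
  have := (sqrt_pos.2 h_pos).ne'
  field_simp

end Tail

section Threshold

variable {r lam : ℝ}

lemma tendsto_hthr_atTop (hr : 0 < r) : Tendsto (hthr r) atTop atTop :=
  tendsto_sqrt_atTop.comp ((tendsto_log_atTop.comp tendsto_natCast_atTop_atTop).const_mul_atTop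
    (by positivity))

lemma tendsto_hthr_mul_rpow_neg (hr : 0 < r) {p : ℝ} (hp : 0 < p) :
    Tendsto (fun m : ℕ => hthr r m * (m : ℝ) ^ (-p)) atTop (𝓝 0) := by
  have h_log : Tendsto (fun m : ℕ => 2 * r * (Real.log m / (m : ℝ) ^ p)) atTop (𝓝 0) :=
    mul_zero (2 * r) ▸ ((isLittleO_log_rpow_atTop hp).tendsto_div_nhds_zero.comp
      tendsto_natCast_atTop_atTop).const_mul (2 * r)
  refine squeeze_zero' (.of_forall fun m => by unfold hthr; positivity) ?_ h_log
  filter_upwards [(tendsto_hthr_atTop hr).eventually_ge_atTop 1] with m hm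
  have : 0 ≤ Real.log m := Real.log_natCast_nonneg m
  have h_sq : hthr r m ^ 2 = 2 * r * Real.log m := sq_sqrt (by positivity)
  calc hthr r m * (m : ℝ) ^ (-p) ≤ hthr r m ^ 2 * (m : ℝ) ^ (-p) := by
        gcongr
        exact le_self_pow₀ hm two_ne_zero
    _ = 2 * r * (Real.log m / (m : ℝ) ^ p) := by
        rw [h_sq, rpow_neg m.cast_nonneg, mul_assoc, div_eq_mul_inv]

lemma epsm_mul_hthr (eta : ℝ) {m : ℕ} (hm : hthr r m ≠ 0) :
    epsm r lam eta m * hthr r m = √(2 * π) * (1 + lam) * (1 - lam ^ 2) ^ ((1 : ℝ) / 4) * eta *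
      (m : ℝ) ^ (-(lam - (2 * r - 1)) / (2 * (1 + lam))) := by
  rw [epsm, ← hthr]
  field_simp

lemma epsm_neg (r lam eta : ℝ) (m : ℕ) : epsm r lam (-eta) m = -epsm r lam eta m := by
  unfold epsm
  ring

lemma tendsto_hthr_sq_mul_epsm (hr : 0 < r) (hlam : 2 * r - 1 < lam) (eta : ℝ) :
    Tendsto (fun m => hthr r m ^ 2 * epsm r lam eta m) atTop (𝓝 0) := by
  have h_exp : 0 < (lam - (2 * r - 1)) / (2 * (1 + lam)) := div_pos (by linarith) (by linarith)
  have h_lim := (tendsto_hthr_mul_rpow_neg hr h_exp).const_mul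
    (√(2 * π) * (1 + lam) * (1 - lam ^ 2) ^ ((1 : ℝ) / 4) * eta)
  rw [mul_zero] at h_lim
  refine h_lim.congr' ?_
  filter_upwards [(tendsto_hthr_atTop hr).eventually_ne_atTop 0] with m hm
  have h_mul := epsm_mul_hthr (lam := lam) eta hm
  rw [neg_div] at h_mul
  linear_combination -hthr r m * h_mul

lemma sqrt_quadrantDecay_hthr (hr : 0 ≤ r) (s : ℝ) {m : ℕ} (hm : m ≠ 0) :
    √(quadrantDecay s (hthr r m)) = (m : ℝ) ^ (-r / (1 + s)) := by
  have : 0 ≤ Real.log m := Real.log_natCast_nonneg m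
  rw [quadrantDecay, ← exp_half, hthr, sq_sqrt (by positivity), rpow_def_of_pos (by positivity)]
  congr 1
  ring

lemma sqrt_quadrantCoeff {s : ℝ} (hs : s ∈ Set.Ioo (-1) 1) :
    √(quadrantCoeff s) = (1 + s) / (√(2 * π) * (1 - s ^ 2) ^ ((1 : ℝ) / 4)) := by
  have h_pos := one_sub_sq_pos hs
  have h_root : √√(1 - s ^ 2) = (1 - s ^ 2) ^ ((1 : ℝ) / 4) := by
    rw [sqrt_eq_rpow, sqrt_eq_rpow, ← rpow_mul h_pos.le]
    norm_num
  rw [quadrantCoeff, sqrt_div (sq_nonneg _), sqrt_sq (by linarith [hs.1]),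
    sqrt_mul (by positivity), h_root]

lemma sqrt_mul_epsm_mul_hthr_mul_sqrt (hr : 0 < r) (hlam : lam ∈ Set.Ioo (-1) 1) (eta : ℝ) {m : ℕ}
    (hm : 1 < m) :
    √m * (epsm r lam eta m * hthr r m * √(quadrantCoeff lam * quadrantDecay lam (hthr r m)) /
      (1 + lam) ^ 2) = eta := by
  have h_log : 0 < Real.log m := Real.log_pos (by exact_mod_cast hm)
  have h_hthr : hthr r m ≠ 0 := (sqrt_pos.2 (by positivity)).ne'
  have h_m : (0 : ℝ) < m := by positivity
  have h_lam : 1 + lam ≠ 0 := by linarith [hlam.1]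
  have h_pow : √m * ((m : ℝ) ^ (-(lam - (2 * r - 1)) / (2 * (1 + lam))) *
      (m : ℝ) ^ (-r / (1 + lam))) = 1 := by
    have h_sum : 1 / 2 + (-(lam - (2 * r - 1)) / (2 * (1 + lam)) + -r / (1 + lam)) = 0 := by
      field_simp
      ring
    rw [sqrt_eq_rpow, ← rpow_add h_m, ← rpow_add h_m, h_sum, rpow_zero]
  have h_root : 0 < (1 - lam ^ 2) ^ ((1 : ℝ) / 4) := rpow_pos_of_pos (one_sub_sq_pos hlam) _
  rw [epsm_mul_hthr eta h_hthr, sqrt_mul (quadrantCoeff_pos hlam).le, sqrt_quadrantCoeff hlam,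
    sqrt_quadrantDecay_hthr hr.le lam (by omega)]
  rw [neg_div, neg_div] at h_pow ⊢
  field_simp
  linear_combination eta * h_pow

end Threshold

theorem isEquivalent_sqrt_mul_muM_sub_div_sigM {r lam : ℝ} (hr : 0 < r)
    (hlam : lam ∈ Set.Ioo (2 * r - 1) 1) (eta : ℝ) :
    Asymptotics.IsEquivalent atTop
      (fun m : ℕ => √m * (muM r m (lam + epsm r lam eta m) - muM r m lam) /
        sigM r m (lam + epsm r lam eta m))
      (fun _ => eta) := by
  have hlam' : lam ∈ Set.Ioo (-1) 1 := ⟨by linarith [hlam.1], hlam.2⟩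
  have h_ratio := isEquivalent_mu_add_sub_div_sigma' hlam' (tendsto_hthr_atTop hr)
    (tendsto_hthr_sq_mul_epsm hr hlam.1 eta)
  refine ((Asymptotics.IsEquivalent.refl (u := fun m : ℕ => √m)).mul h_ratio).congr_left
    (.of_forall fun m => (mul_div_assoc _ _ _).symm) |>.congr_right ?_
  filter_upwards [eventually_gt_atTop 1] with m hm
  exact sqrt_mul_epsm_mul_hthr_mul_sqrt hr hlam' eta hm

theorem stmt9_general {r lam : ℝ} (hr : 0 < r) (hlam : lam ∈ Set.Ioo (2 * r - 1) 1) (eta : ℝ) :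
    Asymptotics.IsEquivalent atTop
      (fun m : ℕ => √m * (muM r m lam - muM r m (lam - epsm r lam eta m)) /
        sigM r m (lam - epsm r lam eta m))
      (fun _ => eta) ∧
    Asymptotics.IsEquivalent atTop
      (fun m : ℕ => -(√m * (muM r m lam - muM r m (lam + epsm r lam eta m)) /
        sigM r m (lam + epsm r lam eta m)))
      (fun _ => eta) ∧
    Tendsto (fun m : ℕ => √m * (muM r m lam - muM r m (lam - epsm r lam eta m)) /
        sigM r m (lam - epsm r lam eta m)) atTop (𝓝 eta) ∧
    Tendsto (fun m : ℕ => -(√m * (muM r m lam - muM r m (lam + epsm r lam eta m)) /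
        sigM r m (lam + epsm r lam eta m))) atTop (𝓝 eta) := by
  have h_minus := (isEquivalent_sqrt_mul_muM_sub_div_sigM hr hlam (-eta)).neg
  have h_plus := isEquivalent_sqrt_mul_muM_sub_div_sigM hr hlam eta
  simp only [epsm_neg, ← sub_eq_add_neg, neg_neg, ← neg_div, ← mul_neg, neg_sub]
    at h_minus h_plus ⊢
  exact ⟨h_minus, h_plus, h_minus.tendsto_const, h_plus.tendsto_const⟩

/-- asymptotic characterization of the parameters `η⁻_m, η⁺_m`. -/
theorem stmt9 (r : ℝ) (hr : r ∈ Set.Ioo (0 : ℝ) 1)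
    (lam : ℝ) (hlam : lam ∈ Set.Ioo (2 * r - 1) 1) (hlam0 : 0 < lam)
    (eta : ℝ) (heta : 0 < eta) :
    Asymptotics.IsEquivalent atTop
      (fun m : ℕ => Real.sqrt m * (muM r m lam - muM r m (lam - epsm r lam eta m)) /
        sigM r m (lam - epsm r lam eta m))
      (fun _ : ℕ => eta) ∧
    Asymptotics.IsEquivalent atTop
      (fun m : ℕ => -(Real.sqrt m * (muM r m lam - muM r m (lam + epsm r lam eta m)) /
        sigM r m (lam + epsm r lam eta m)))
      (fun _ : ℕ => eta) ∧
    Tendsto (fun m : ℕ => Real.sqrt m * (muM r m lam - muM r m (lam - epsm r lam eta m)) /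
        sigM r m (lam - epsm r lam eta m)) atTop (nhds eta) ∧
    Tendsto (fun m : ℕ => -(Real.sqrt m * (muM r m lam - muM r m (lam + epsm r lam eta m)) /
        sigM r m (lam + epsm r lam eta m))) atTop (nhds eta) := by
  exact stmt9_general hr.1 hlam eta

end
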